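/- (Indefinite bibasic summation formula) Let p, q, a, b, c be complex numbers such that all denominator factors below are nonzero, and let n be a nonnegative integer. Then ∑_{k=0}^{n} ((1 - a p^k q^k)(1 - b p^k q^{-k}) / ((1-a)(1-b))) · ((a;p)_k (b;p)_k (c;q)_k (a/(bc);q)_k / ((q;q)_k (aq/b;q)_k (ap/c;p)_k (bcp;p)_k)) q^k = (ap;p)_n (bp;p)_n (cq;q)_n (aq/(bc);q)_n / ((q;q)_n (aq/b;q)_n (ap/c;p)_n (bcp;p)_n). -/

import Mathlib

/-- The finite r-shifted factorial `(a;r)_k = ∏_{j=0}^{k-1} (1 - a r^j)`. -/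
noncomputable def qPoch (a r : ℂ) (k : ℕ) : ℂ := ∏ j ∈ Finset.range k, (1 - a * r ^ j)

theorem qPoch_last (a r : ℂ) (k : ℕ) :
    qPoch a r (k + 1) = qPoch a r k * (1 - a * r ^ k) := by
  simp [qPoch, Finset.prod_range_succ]

theorem qPoch_first (a r : ℂ) (k : ℕ) :
    qPoch a r (k + 1) = (1 - a) * qPoch (a * r) r k := by
  unfold qPoch
  rw [Finset.prod_range_succ', mul_comm]
  simp only [pow_zero, mul_one]
  congr 1
  apply Finset.prod_congr rfl
  intro j _
  ring

theorem bibasic_poly (a b c P Q : ℂ) (hQ : Q ≠ 0) (hb : b ≠ 0) (hc : c ≠ 0) :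
    (1 - Q) * (1 - a * Q / b) * (1 - a * P / c) * (1 - b * c * P) +
      (1 - a * P * Q) * (1 - b * P / Q) * ((1 - c) * (1 - a / (b * c))) * Q =
    (1 - a * P) * (1 - b * P) * (1 - c * Q) * (1 - a * Q / (b * c)) := by
  field_simp
  ring

/-- The indefinite bibasic summation formula (Gasper):
`∑_{k=0}^n ((1-ap^kq^k)(1-bp^kq^{-k})/((1-a)(1-b)))
    ((a,b;p)_k (c,a/(bc);q)_k/((q,aq/b;q)_k (ap/c,bcp;p)_k)) q^k
  = ((ap,bp;p)_n (cq,aq/(bc);q)_n)/((q,aq/b;q)_n (ap/c,bcp;p)_n)`,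
assuming nonzero denominator factors. -/
theorem indefinite_bibasic_summation (p q a b c : ℂ) (n : ℕ)
    (hq0 : q ≠ 0) (hb0 : b ≠ 0) (hc0 : c ≠ 0) (ha1 : a ≠ 1) (hb1 : b ≠ 1)
    (hden : ∀ k ≤ n, qPoch q q k ≠ 0 ∧ qPoch (a * q / b) q k ≠ 0 ∧
      qPoch (a * p / c) p k ≠ 0 ∧ qPoch (b * c * p) p k ≠ 0) :
    ∑ k ∈ Finset.range (n + 1),
        (1 - a * p ^ k * q ^ k) * (1 - b * p ^ k / q ^ k) / ((1 - a) * (1 - b)) *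
          (qPoch a p k * qPoch b p k * qPoch c q k * qPoch (a / (b * c)) q k /
            (qPoch q q k * qPoch (a * q / b) q k * qPoch (a * p / c) p k *
              qPoch (b * c * p) p k)) * q ^ k =
      qPoch (a * p) p n * qPoch (b * p) p n * qPoch (c * q) q n *
          qPoch (a * q / (b * c)) q n /
        (qPoch q q n * qPoch (a * q / b) q n * qPoch (a * p / c) p n *
          qPoch (b * c * p) p n) := by
  have ha : 1 - a ≠ 0 := sub_ne_zero.mpr ha1.symm
  have hb : 1 - b ≠ 0 := sub_ne_zero.mpr hb1.symm
  induction n with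
  | zero => simp [qPoch, ha, hb]
  | succ n ih =>
    rw [Finset.sum_range_succ, ih (fun k hk => hden k (by omega))]
    obtain ⟨h1, h2, h3, h4⟩ := hden (n + 1) le_rfl
    have key := bibasic_poly a b c (p ^ (n + 1)) (q ^ (n + 1)) (pow_ne_zero _ hq0) hb0 hc0
    rw [qPoch_first a, qPoch_first b, qPoch_first c, qPoch_first (a / (b * c))]
    rw [show a / (b * c) * q = a * q / (b * c) by ring]
    rw [qPoch_last] at h1 h2 h3 h4
    simp only [qPoch_last]
    rw [show 1 - q * q ^ n = 1 - q ^ (n + 1) by ring] at *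
    rw [show 1 - a * q / b * q ^ n = 1 - a * q ^ (n + 1) / b by ring] at *
    rw [show 1 - a * p / c * p ^ n = 1 - a * p ^ (n + 1) / c by ring] at *
    rw [show 1 - b * c * p * p ^ n = 1 - b * c * p ^ (n + 1) by ring] at *
    rw [show 1 - a * p * p ^ n = 1 - a * p ^ (n + 1) by ring,
      show 1 - b * p * p ^ n = 1 - b * p ^ (n + 1) by ring,
      show 1 - c * q * q ^ n = 1 - c * q ^ (n + 1) by ring,
      show 1 - a * q / (b * c) * q ^ n = 1 - a * q ^ (n + 1) / (b * c) by ring]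
    generalize 1 - a * p ^ (n + 1) * q ^ (n + 1) = x1 at *
    generalize 1 - b * p ^ (n + 1) / q ^ (n + 1) = x2 at *
    generalize 1 - a * q ^ (n + 1) / (b * c) = x3 at *
    generalize 1 - a * q ^ (n + 1) / b = d2 at *
    generalize 1 - a * p ^ (n + 1) / c = d3 at *
    generalize 1 - b * c * p ^ (n + 1) = d4 at *
    generalize 1 - a / (b * c) = x4 at *
    generalize 1 - a * p ^ (n + 1) = x5 at *
    generalize 1 - b * p ^ (n + 1) = x6 at *
    generalize 1 - c * q ^ (n + 1) = x7 at *
    generalize hd1 : 1 - q ^ (n + 1) = d1 at *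
    generalize q ^ (n + 1) = Q at *
    generalize 1 - a = a' at *
    generalize 1 - b = b' at *
    generalize 1 - c = c' at *
    generalize qPoch (a * p) p n = A at *
    generalize qPoch (b * p) p n = B at *
    generalize qPoch (c * q) q n = C at *
    generalize qPoch (a * q / (b * c)) q n = D at *
    generalize qPoch q q n = E at *
    generalize qPoch (a * q / b) q n = F at *
    generalize qPoch (a * p / c) p n = G at *
    generalize qPoch (b * c * p) p n = H at *
    obtain ⟨hE, hd1'⟩ := mul_ne_zero_iff.mp h1
    obtain ⟨hF, hd2⟩ := mul_ne_zero_iff.mp h2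
    obtain ⟨hG, hd3⟩ := mul_ne_zero_iff.mp h3
    obtain ⟨hH, hd4⟩ := mul_ne_zero_iff.mp h4
    clear h1 h2 h3 h4 ih hden hd1
    field_simp
    linear_combination (A * B * C * D) * key
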